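/- arXiv:2506.10572 — 3 statements merged into one kernel-verified Lean document; each statement's English description precedes it below -/
import Mathlib

section
/- Let τ > 0, x ∈ ℝ^K, and let a ∈ ℝ be a scalar with 0 ≤ a < 1/K. Let q be the maximizer of F_{τ,x} over Δ^K ∩ {y : a ≤ y_i ≤ 1 for all i} (i.e. only a lower bound, the upper bound being 1). Then the sets of maximizing indices coincide exactly: {i : x_i = max_j x_j} = {i : q_i = max_j q_j}. -/
/-- The probability simplex Δ^K. -/
def simplex (K : ℕ) : Set (Fin K → ℝ) :=
  {p | (∀ i, 0 ≤ p i) ∧ ∑ i, p i = 1}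

/-- The entropic objective F_{τ,x}(y) = Σ x_i y_i − τ Σ y_i log y_i
(Real.log 0 = 0 gives the convention 0·log 0 = 0). -/
noncomputable def F {K : ℕ} (τ : ℝ) (x y : Fin K → ℝ) : ℝ :=
  ∑ i, x i * y i - τ * ∑ i, y i * Real.log (y i)

/-!
Only two coordinates of the maximizer `q` are ever varied, keeping their sum fixed. If `x j ≤ x i`
but `q i < q j`, averaging these two coordinates does not decrease the linear part and strictly
decreases the strictly convex penalty `φ`, here `τ * (t * log t)`; hence `x j ≤ x i` implies
`q j ≤ q i`. Conversely, a largest coordinate `q i` is at least the average, hence strictly above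
the lower bound. If `x i < x j`, then `q j = q i`, and both coordinates may be moved in either
direction, so the first-order condition `x i - φ' (q i) = x j - φ' (q j)` forces `x i = x j`.
-/

open Set Filter Topology

section Allocation

variable {ι : Type*} [Fintype ι]

/-- The ways of dividing a total amount `s` among the members of `ι`, each share lying in `I`:
the feasible set of a separable allocation problem. -/
def allocations (I : Set ℝ) (s : ℝ) : Set (ι → ℝ) :=
  {y | (∀ k, y k ∈ I) ∧ ∑ k, y k = s}

/-- `q` solves the separable allocation problem of maximizing `∑ k, g k (y k)` over the
allocations `y` of `s` with shares in `I`. -/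
structure IsOptimalAllocation (g : ι → ℝ → ℝ) (I : Set ℝ) (s : ℝ) (q : ι → ℝ) : Prop where
  mem : q ∈ allocations I s
  isMaxOn : IsMaxOn (fun y ↦ ∑ k, g k (y k)) (allocations I s) q

theorem sum_apply_update_update [DecidableEq ι] {M : Type*} [AddCommGroup M] {β : ι → Type*}
    (g : ∀ k, β k → M) (q : ∀ k, β k) {i j : ι} (hij : i ≠ j) (u : β i) (v : β j) :
    ∑ k, g k (Function.update (Function.update q i u) j v k) =
      ∑ k, g k (q k) + ((g i u - g i (q i)) + (g j v - g j (q j))) := by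
  rw [← sub_eq_iff_eq_add', ← Finset.sum_sub_distrib, Fintype.sum_eq_add i j hij]
  · simp [hij]
  · rintro k ⟨hki, hkj⟩
    simp [hki, hkj]

theorem lt_of_card_mul_lt_sum {R : Type*} [Semiring R] [LinearOrder R] [IsOrderedAddMonoid R]
    {q : ι → R} {a : R} {i : ι} (ha : Fintype.card ι * a < ∑ k, q k) (hi : ∀ j, q j ≤ q i) :
    a < q i := by
  obtain ⟨k, -, hk⟩ : ∃ k ∈ Finset.univ, a < q k :=
    Finset.exists_lt_of_sum_lt (by simpa using ha)
  exact hk.trans_le (hi k)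

namespace IsOptimalAllocation

variable {I : Set ℝ} {s : ℝ} {q : ι → ℝ} {i j : ι}

theorem add_le_add_of_add_eq {g : ι → ℝ → ℝ} (hq : IsOptimalAllocation g I s q) (hij : i ≠ j)
    {u v : ℝ} (hu : u ∈ I) (hv : v ∈ I) (huv : u + v = q i + q j) :
    g i u + g j v ≤ g i (q i) + g j (q j) := by
  classical
  have mem : Function.update (Function.update q i u) j v ∈ allocations I s := by
    refine ⟨fun k ↦ ?_, ?_⟩
    · rcases eq_or_ne k j with rfl | hkj
      · simpa using hv
      · rcases eq_or_ne k i with rfl | hki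
        · simpa [hkj] using hu
        · simpa [hkj, hki] using hq.mem.1 k
    · have hsum := sum_apply_update_update (fun _ t ↦ t) q hij u v
      linarith [hq.mem.2]
  have le := isMaxOn_iff.1 hq.isMaxOn _ mem
  rw [sum_apply_update_update g q hij] at le
  linarith

theorem eq_of_hasDerivAt {g : ι → ℝ → ℝ} (hq : IsOptimalAllocation g I s q) (hi : I ∈ 𝓝 (q i))
    (hj : I ∈ 𝓝 (q j)) {c d : ℝ} (hc : HasDerivAt (g i) c (q i)) (hd : HasDerivAt (g j) d (q j)) :
    c = d := by
  rcases eq_or_ne i j with rfl | hij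
  · exact hc.unique hd
  have add_mem : ∀ᶠ t in 𝓝 (0 : ℝ), q i + t ∈ I :=
    (continuous_const.add continuous_id).tendsto' 0 (q i) (add_zero _) hi
  have sub_mem : ∀ᶠ t in 𝓝 (0 : ℝ), q j - t ∈ I :=
    (continuous_const.sub continuous_id).tendsto' 0 (q j) (sub_zero _) hj
  have isLocalMax : IsLocalMax (fun t ↦ g i (q i + t) + g j (q j - t)) 0 := by
    filter_upwards [add_mem, sub_mem] with t hti htj
    simpa using hq.add_le_add_of_add_eq hij hti htj (by ring)
  have hasDerivAt : HasDerivAt (fun t ↦ g i (q i + t) + g j (q j - t)) (c + -d) 0 :=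
    (HasDerivAt.comp_const_add (q i) 0 (by simpa using hc)).add
      (HasDerivAt.comp_const_sub (q j) 0 (by simpa using hd))
  linarith [isLocalMax.hasDerivAt_eq_zero hasDerivAt]

variable {φ : ℝ → ℝ} {x : ι → ℝ}

theorem le_of_strictConvexOn (hq : IsOptimalAllocation (fun k t ↦ x k * t - φ t) I s q)
    (hφ : StrictConvexOn ℝ I φ) (hx : x j ≤ x i) : q j ≤ q i := by
  by_contra! hlt
  have hij : i ≠ j := by
    rintro rfl
    exact hlt.false
  have midpoint_mem : 2⁻¹ * q i + 2⁻¹ * q j ∈ I :=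
    hφ.1 (hq.mem.1 i) (hq.mem.1 j) (by norm_num) (by norm_num) (by norm_num)
  have penalty_lt : φ (2⁻¹ * q i + 2⁻¹ * q j) < 2⁻¹ * φ (q i) + 2⁻¹ * φ (q j) :=
    hφ.2 (hq.mem.1 i) (hq.mem.1 j) hlt.ne (by norm_num) (by norm_num) (by norm_num)
  have le := hq.add_le_add_of_add_eq hij midpoint_mem midpoint_mem (by ring)
  have linear_gain : 0 ≤ (x i - x j) * (q j - q i) :=
    mul_nonneg (sub_nonneg.2 hx) (sub_nonneg.2 hlt.le)
  linarith

theorem eq_of_eq_of_differentiableAt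
    (hq : IsOptimalAllocation (fun k t ↦ x k * t - φ t) I s q) (hI : I ∈ 𝓝 (q i))
    (hφ : DifferentiableAt ℝ φ (q i)) (h : q i = q j) : x i = x j := by
  have hasDerivAt (k : ι) : HasDerivAt (fun t ↦ x k * t - φ t) (x k - deriv φ (q i)) (q i) :=
    (hasDerivAt_const_mul (x k)).sub hφ.hasDerivAt
  exact sub_left_injective (hq.eq_of_hasDerivAt hI (h ▸ hI) (hasDerivAt i) (h ▸ hasDerivAt j))

end IsOptimalAllocation

theorem bcsoftmax_lower_bound_exactly_preserves_argmax_general {φ : ℝ → ℝ} {x q : ι → ℝ} {a s : ℝ}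
    (hconv : StrictConvexOn ℝ (Ici a) φ) (hdiff : DifferentiableOn ℝ φ (Ioi a))
    (has : Fintype.card ι * a < s)
    (hq : IsOptimalAllocation (fun k t ↦ x k * t - φ t) (Ici a) s q) (i : ι) :
    (∀ j, x j ≤ x i) ↔ ∀ j, q j ≤ q i := by
  refine ⟨fun h j ↦ hq.le_of_strictConvexOn hconv (h j), fun h j ↦ ?_⟩
  by_contra! hlt
  have lower_lt : a < q i := lt_of_card_mul_lt_sum (hq.mem.2 ▸ has) h
  have heq : q i = q j := (hq.le_of_strictConvexOn hconv hlt.le).antisymm (h j)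
  exact hlt.ne (hq.eq_of_eq_of_differentiableAt (Ici_mem_nhds lower_lt)
    (hdiff.differentiableAt (Ioi_mem_nhds lower_lt)) heq)

end Allocation

section Entropy

theorem strictConvexOn_const_mul {E : Type*} [AddCommMonoid E] [SMul ℝ E] {S : Set E} {f : E → ℝ}
    (hf : StrictConvexOn ℝ S f) {τ : ℝ} (hτ : 0 < τ) : StrictConvexOn ℝ S fun y ↦ τ * f y := by
  refine ⟨hf.1, fun u hu v hv huv b c hb hc hbc ↦ ?_⟩
  calc τ * f (b • u + c • v) < τ * (b • f u + c • f v) :=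
        mul_lt_mul_of_pos_left (hf.2 hu hv huv hb hc hbc) hτ
    _ = b • (τ * f u) + c • (τ * f v) := by simp only [smul_eq_mul]; ring

theorem strictConvexOn_const_mul_mul_log {τ a : ℝ} (hτ : 0 < τ) (ha : 0 ≤ a) :
    StrictConvexOn ℝ (Ici a) fun t ↦ τ * (t * Real.log t) :=
  (strictConvexOn_const_mul Real.strictConvexOn_mul_log hτ).subset (Ici_subset_Ici.2 ha)
    (convex_Ici a)

theorem differentiableOn_const_mul_mul_log (τ : ℝ) {a : ℝ} (ha : 0 ≤ a) :
    DifferentiableOn ℝ (fun t ↦ τ * (t * Real.log t)) (Ioi a) :=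
  (Real.differentiableOn_mul_log.mono fun _ ht ↦ (ha.trans_lt ht).ne').const_mul τ

theorem F_eq_sum {K : ℕ} (τ : ℝ) (x y : Fin K → ℝ) :
    F τ x y = ∑ k, (x k * y k - τ * (y k * Real.log (y k))) := by
  rw [F, Finset.mul_sum, Finset.sum_sub_distrib]

variable {K : ℕ} {τ a : ℝ} {x q : Fin K → ℝ}

theorem mem_simplex_and_bounds_iff_mem_allocations (ha : 0 ≤ a) :
    (q ∈ simplex K ∧ ∀ i, a ≤ q i ∧ q i ≤ 1) ↔ q ∈ allocations (Ici a) 1 := by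
  refine ⟨fun ⟨hq, hbounds⟩ ↦ ⟨fun i ↦ (hbounds i).1, hq.2⟩, fun ⟨hlower, hsum⟩ ↦ ?_⟩
  have nonneg (i : Fin K) : 0 ≤ q i := ha.trans (hlower i)
  refine ⟨⟨nonneg, hsum⟩, fun i ↦ ⟨hlower i, ?_⟩⟩
  exact hsum ▸ Finset.single_le_sum (fun k _ ↦ nonneg k) (Finset.mem_univ i)

theorem isOptimalAllocation_of_forall_F_le (ha : 0 ≤ a)
    (hq : q ∈ simplex K ∧ ∀ i, a ≤ q i ∧ q i ≤ 1)
    (hqmax : ∀ z, (z ∈ simplex K ∧ ∀ i, a ≤ z i ∧ z i ≤ 1) → F τ x z ≤ F τ x q) :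
    IsOptimalAllocation (fun k t ↦ x k * t - τ * (t * Real.log t)) (Ici a) 1 q := by
  simp only [mem_simplex_and_bounds_iff_mem_allocations ha, F_eq_sum] at hq hqmax
  exact ⟨hq, isMaxOn_iff.2 hqmax⟩

end Entropy

/-- with only a scalar lower bound 0 ≤ a < 1/K (upper bound 1),
the constrained maximizer q has exactly the same set of maximizing indices
as x. -/
theorem bcsoftmax_lower_bound_exactly_preserves_argmax
    (K : ℕ) (hK : 1 ≤ K) (τ : ℝ) (hτ : 0 < τ) (x : Fin K → ℝ)
    (a : ℝ) (ha0 : 0 ≤ a) (ha1 : a < 1 / (K : ℝ))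
    (q : Fin K → ℝ)
    (hq : q ∈ simplex K ∧ ∀ i, a ≤ q i ∧ q i ≤ 1)
    (hqmax : ∀ z, (z ∈ simplex K ∧ ∀ i, a ≤ z i ∧ z i ≤ 1) → F τ x z ≤ F τ x q) :
    ∀ i : Fin K, (∀ j, x j ≤ x i) ↔ ∀ j, q j ≤ q i :=
  bcsoftmax_lower_bound_exactly_preserves_argmax_general
    (strictConvexOn_const_mul_mul_log hτ ha0) (differentiableOn_const_mul_mul_log τ ha0)
    (by simpa [mul_comm] using (lt_div_iff₀ (Nat.cast_pos.2 hK)).1 ha1)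
    (isOptimalAllocation_of_forall_F_le ha0 hq hqmax)
end

section
/- Let x ∈ ℝ^K and (a,b) ∈ B^K be such that a_i = b_i for all i ≤ k, for some k ∈ {0,…,K−1}, and suppose s_k := 1 − Σ_{i=1}^{k} a_i > 0. Let u ∈ ℝ^{K−k} be the maximizer of F_{1,(x_{k+1},…,x_K)} over Δ^{K−k} ∩ {u : a_{k+j}/s_k ≤ u_j ≤ b_{k+j}/s_k for all j}. Then the maximizer y of F_{1,x} over Δ^K ∩ {y : a_i ≤ y_i ≤ b_i for all i} satisfies y_i = a_i for all i ≤ k and y_i = s_k · u_{i−k} for all i > k. -/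
/-- s_k = 1 − Σ_{i=1}^k a_i (0-based: indices i with i < k). -/
noncomputable def sHead {K : ℕ} (a : Fin K → ℝ) (k : ℕ) : ℝ :=
  1 - ∑ i ∈ Finset.univ.filter (fun i : Fin K => (i : ℕ) < k), a i

/-!
Fix the coordinates outside the range of an embedding `f` at `a`, let `s` be the mass this leaves to
the range of `f`, and send `v` to the vector that agrees with `a` outside the range of `f` and with
`s • v` along `f`. Since `negMulLog (s * t) = t * negMulLog s + s * negMulLog t`, this map turns the
entropic objective on the simplex into `s` times the entropic objective of the free coordinates,
plus a constant. It is also a bijection from the rescaled feasible set onto the original one, so it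
matches maximizers with maximizers, and these are unique by strict concavity.
-/

section StrictConcavity

variable {𝕜 β : Type*} [PartialOrder 𝕜] [AddCommMonoid β] [PartialOrder β]

theorem strictConcaveOn_smul {E : Type*} [CommSemiring 𝕜] [AddCommMonoid E] [SMul 𝕜 E]
    [Module 𝕜 β] [PosSMulStrictMono 𝕜 β] {s : Set E} {φ : E → β} {c : 𝕜} (hc : 0 < c)
    (hφ : StrictConcaveOn 𝕜 s φ) : StrictConcaveOn 𝕜 s fun x => c • φ x := by
  refine ⟨hφ.1, fun x hx y hy hxy p q hp hq hpq => ?_⟩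
  calc
    p • c • φ x + q • c • φ y = c • (p • φ x + q • φ y) := by
      rw [smul_add, smul_comm c, smul_comm c]
    _ < c • φ (p • x + q • y) := smul_lt_smul_of_pos_left (hφ.2 hx hy hxy hp hq hpq) hc

theorem strictConcaveOn_pi_sum {ι : Type*} {E : ι → Type*} [Fintype ι] [Semiring 𝕜]
    [∀ i, AddCommMonoid (E i)] [∀ i, Module 𝕜 (E i)] [IsOrderedCancelAddMonoid β] [Module 𝕜 β]
    {s : ∀ i, Set (E i)} {φ : ∀ i, E i → β} (hφ : ∀ i, StrictConcaveOn 𝕜 (s i) (φ i)) :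
    StrictConcaveOn 𝕜 (Set.univ.pi s) fun y => ∑ i, φ i (y i) := by
  refine ⟨convex_pi fun i _ => (hφ i).1, fun y hy z hz hyz p q hp hq hpq => ?_⟩
  obtain ⟨i₀, hi₀⟩ := Function.ne_iff.mp hyz
  rw [Finset.smul_sum, Finset.smul_sum, ← Finset.sum_add_distrib]
  refine Finset.sum_lt_sum (fun i _ => ?_) ⟨i₀, Finset.mem_univ i₀, ?_⟩
  · obtain heq | hne := eq_or_ne (y i) (z i)
    · simp only [Pi.add_apply, Pi.smul_apply, heq, ← add_smul, hpq, one_smul, le_refl]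
    · exact ((hφ i).2 (hy i trivial) (hz i trivial) hne hp hq hpq).le
  · exact (hφ i₀).2 (hy i₀ trivial) (hz i₀ trivial) hi₀ hp hq hpq

end StrictConcavity

section Extend

variable {ι κ β : Type*} (f : κ ↪ ι) (v : κ → β) (a : ι → β)

theorem forall_apply_extend_iff (P : ι → β → Prop) :
    (∀ i, P i (Function.extend f v a i)) ↔
      (∀ i ∉ Set.range f, P i (a i)) ∧ ∀ j, P (f j) (v j) := by
  refine ⟨fun h => ⟨fun i hi => ?_, fun j => ?_⟩, fun ⟨hfixed, hfree⟩ i => ?_⟩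
  · simpa only [Function.extend_apply' v a i hi] using h i
  · simpa only [f.injective.extend_apply] using h (f j)
  · by_cases hi : i ∈ Set.range f
    · obtain ⟨j, rfl⟩ := hi
      simpa only [f.injective.extend_apply] using hfree j
    · simpa only [Function.extend_apply' v a i hi] using hfixed i hi

theorem sum_apply_extend {M : Type*} [AddCommMonoid M] [Fintype ι] [Fintype κ] [DecidableEq ι]
    (φ : ι → β → M) :
    ∑ i, φ i (Function.extend f v a i) =
      ∑ i ∈ (Finset.univ.map f)ᶜ, φ i (a i) + ∑ j, φ (f j) (v j) := by
  rw [← Finset.sum_compl_add_sum (Finset.univ.map f), Finset.sum_map]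
  congr 1
  · refine Finset.sum_congr rfl fun i hi => ?_
    rw [Function.extend_apply' v a i (by simpa using hi)]
  · simp only [f.injective.extend_apply]

end Extend

section BoxConstrainedSoftmax

variable {ι κ : Type*} [Fintype ι] [Fintype κ]

/-- The entropic objective `F` over an arbitrary finite index type, with the entropy term expressed
through `Real.negMulLog`. -/
noncomputable def entropicObjective (τ : ℝ) (x y : ι → ℝ) : ℝ :=
  ∑ i, (x i * y i + τ * Real.negMulLog (y i))

/-- The probability vectors satisfying the box constraints `a ≤ y ≤ b`: the feasible set of the
box-constrained softmax. -/
def boxSimplex (a b : ι → ℝ) : Set (ι → ℝ) :=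
  stdSimplex ℝ ι ∩ Set.Icc a b

theorem strictConcaveOn_entropicObjective {τ : ℝ} (hτ : 0 < τ) (x : ι → ℝ) :
    StrictConcaveOn ℝ (Set.univ.pi fun _ => Set.Ici 0) (entropicObjective τ x) :=
  strictConcaveOn_pi_sum fun i =>
    ((LinearMap.mulLeft ℝ (x i)).concaveOn (convex_Ici 0)).add_strictConcaveOn
      (strictConcaveOn_smul hτ Real.strictConcaveOn_negMulLog)

theorem convex_boxSimplex (a b : ι → ℝ) : Convex ℝ (boxSimplex a b) :=
  (convex_stdSimplex ℝ ι).inter (convex_Icc a b)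

theorem eq_of_isMaxOn_entropicObjective {τ : ℝ} (hτ : 0 < τ) {x a b y z : ι → ℝ}
    (hy : y ∈ boxSimplex a b) (hymax : IsMaxOn (entropicObjective τ x) (boxSimplex a b) y)
    (hz : z ∈ boxSimplex a b) (hzmax : IsMaxOn (entropicObjective τ x) (boxSimplex a b) z) :
    y = z :=
  ((strictConcaveOn_entropicObjective hτ x).subset (fun _ hw i _ => hw.1.1 i)
    (convex_boxSimplex a b)).eq_of_isMaxOn hymax hzmax hy hz

variable [DecidableEq ι] {f : κ ↪ ι} {a b : ι → ℝ}

/-- The mass that a probability vector equal to `a` outside the range of `f` puts on the range of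
`f`. This is `s_k` when `f` enumerates the last `K - k` coordinates. -/
noncomputable def residualMass (f : κ ↪ ι) (a : ι → ℝ) : ℝ :=
  1 - ∑ i ∈ (Finset.univ.map f)ᶜ, a i

theorem entropicObjective_extend_smul (τ s : ℝ) (x : ι → ℝ) (v : κ → ℝ) :
    entropicObjective τ x (Function.extend f (s • v) a) =
      ∑ i ∈ (Finset.univ.map f)ᶜ, (x i * a i + τ * Real.negMulLog (a i)) +
        (s * entropicObjective τ (x ∘ f) v + τ * Real.negMulLog s * ∑ j, v j) := by
  simp only [entropicObjective,
    sum_apply_extend f (s • v) a fun i t => x i * t + τ * Real.negMulLog t,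
    Finset.mul_sum, ← Finset.sum_add_distrib]
  congr 1
  refine Finset.sum_congr rfl fun j _ => ?_
  rw [Pi.smul_apply, smul_eq_mul, Real.negMulLog_mul, Function.comp_apply]
  ring

theorem sum_extend_residualMass_smul_eq_one_iff (hs : residualMass f a ≠ 0) {v : κ → ℝ} :
    ∑ i, Function.extend f (residualMass f a • v) a i = 1 ↔ ∑ j, v j = 1 := by
  have hsum : ∑ i, Function.extend f (residualMass f a • v) a i =
      (1 - residualMass f a) + residualMass f a * ∑ j, v j := by
    rw [sum_apply_extend f _ a fun _ t => t, Finset.mul_sum, residualMass, sub_sub_cancel]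
    rfl
  rw [hsum, ← mul_eq_left₀ (b := ∑ j, v j) hs]
  constructor <;> intro h <;> linarith

theorem extend_residualMass_smul_mem_boxSimplex_iff (hfix : ∀ i ∉ Set.range f, a i = b i)
    (ha : ∀ i ∉ Set.range f, 0 ≤ a i) (hs : 0 < residualMass f a) {v : κ → ℝ} :
    Function.extend f (residualMass f a • v) a ∈ boxSimplex a b ↔
      v ∈ boxSimplex (fun j => a (f j) / residualMass f a) fun j => b (f j) / residualMass f a := by
  have hnonneg : (∀ i, 0 ≤ Function.extend f (residualMass f a • v) a i) ↔ ∀ j, 0 ≤ v j := by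
    simp only [forall_apply_extend_iff f _ a fun _ t => 0 ≤ t, and_iff_right ha, Pi.smul_apply,
      smul_eq_mul, mul_nonneg_iff_of_pos_left hs]
  have hlower : a ≤ Function.extend f (residualMass f a • v) a ↔
      (fun j => a (f j) / residualMass f a) ≤ v := by
    simp only [Pi.le_def, forall_apply_extend_iff f _ a fun i t => a i ≤ t, le_refl, implies_true,
      true_and, Pi.smul_apply, smul_eq_mul, div_le_iff₀' hs]
  have hupper : Function.extend f (residualMass f a • v) a ≤ b ↔
      v ≤ fun j => b (f j) / residualMass f a := by
    simp only [Pi.le_def, forall_apply_extend_iff f _ a fun i t => t ≤ b i,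
      and_iff_right fun i hi => (hfix i hi).le, Pi.smul_apply, smul_eq_mul, le_div_iff₀' hs]
  exact and_congr (and_congr hnonneg (sum_extend_residualMass_smul_eq_one_iff hs.ne'))
    (and_congr hlower hupper)

theorem isMaxOn_of_isMaxOn_extend_residualMass_smul {τ : ℝ} {x : ι → ℝ}
    (hfix : ∀ i ∉ Set.range f, a i = b i) (ha : ∀ i ∉ Set.range f, 0 ≤ a i)
    (hs : 0 < residualMass f a) {v : κ → ℝ} (hv : ∑ j, v j = 1)
    (hmax : IsMaxOn (entropicObjective τ x) (boxSimplex a b)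
      (Function.extend f (residualMass f a • v) a)) :
    IsMaxOn (entropicObjective τ (x ∘ f))
      (boxSimplex (fun j => a (f j) / residualMass f a) fun j => b (f j) / residualMass f a) v := by
  refine isMaxOn_iff.mpr fun w hw => ?_
  have hle := isMaxOn_iff.mp hmax _
    ((extend_residualMass_smul_mem_boxSimplex_iff hfix ha hs).mpr hw)
  rw [entropicObjective_extend_smul, entropicObjective_extend_smul, hv, hw.1.2] at hle
  exact le_of_mul_le_mul_left (by linarith) hs

theorem bcsoftmax_fixed_head_recursion_general {τ : ℝ} (hτ : 0 < τ) {x y : ι → ℝ} {u : κ → ℝ}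
    (hfix : ∀ i ∉ Set.range f, a i = b i) (hs : 0 < residualMass f a)
    (hu : u ∈ boxSimplex (fun j => a (f j) / residualMass f a) fun j => b (f j) / residualMass f a)
    (humax : IsMaxOn (entropicObjective τ (x ∘ f))
      (boxSimplex (fun j => a (f j) / residualMass f a) fun j => b (f j) / residualMass f a) u)
    (hy : y ∈ boxSimplex a b) (hymax : IsMaxOn (entropicObjective τ x) (boxSimplex a b) y) :
    y = Function.extend f (residualMass f a • u) a := by
  have hya : ∀ i ∉ Set.range f, a i = y i := fun i hi =>
    le_antisymm (hy.2.1 i) ((hy.2.2 i).trans (hfix i hi).ge)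
  have ha : ∀ i ∉ Set.range f, 0 ≤ a i := fun i hi => hya i hi ▸ hy.1.1 i
  obtain ⟨v, rfl⟩ : ∃ v, Function.extend f (residualMass f a • v) a = y := by
    refine ⟨(residualMass f a)⁻¹ • (y ∘ f), funext ?_⟩
    rw [smul_inv_smul₀ hs.ne']
    exact (forall_apply_extend_iff f _ a fun i t => t = y i).mpr ⟨hya, fun _ => rfl⟩
  have hv := (extend_residualMass_smul_mem_boxSimplex_iff hfix ha hs).mp hy
  have hvmax := isMaxOn_of_isMaxOn_extend_residualMass_smul hfix ha hs hv.1.2 hymax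
  rw [eq_of_isMaxOn_entropicObjective hτ hv hvmax hu humax]

end BoxConstrainedSoftmax

section Tail

variable {K k : ℕ}

theorem F_eq_entropicObjective (τ : ℝ) (x y : Fin K → ℝ) :
    F τ x y = entropicObjective τ x y := by
  simp only [F, entropicObjective, Real.negMulLog_eq_neg, mul_neg, Finset.sum_add_distrib,
    Finset.sum_neg_distrib, Finset.mul_sum, sub_eq_add_neg]

theorem mem_boxSimplex_iff_mem_simplex {a b y : Fin K → ℝ} :
    y ∈ boxSimplex a b ↔ y ∈ simplex K ∧ ∀ i, a i ≤ y i ∧ y i ≤ b i :=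
  and_congr Iff.rfl forall_and.symm

theorem isMaxOn_entropicObjective_boxSimplex_iff {τ : ℝ} {x a b y : Fin K → ℝ} :
    IsMaxOn (entropicObjective τ x) (boxSimplex a b) y ↔
      ∀ z, (z ∈ simplex K ∧ ∀ i, a i ≤ z i ∧ z i ≤ b i) → F τ x z ≤ F τ x y := by
  simp only [isMaxOn_iff, mem_boxSimplex_iff_mem_simplex, F_eq_entropicObjective]

/-- The enumeration `j ↦ k + j` of the last `K - k` coordinates; the domain is empty when
`K ≤ k`. -/
def tailEmbedding (K k : ℕ) : Fin (K - k) ↪ Fin K where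
  toFun j := ⟨k + j, by omega⟩
  inj' _ _ h := Fin.ext (Nat.add_left_cancel (Fin.val_eq_of_eq h))

theorem tailEmbedding_sub {i : Fin K} (h : k ≤ i) :
    tailEmbedding K k ⟨i - k, by omega⟩ = i :=
  Fin.ext (Nat.add_sub_cancel' h)

theorem notMem_range_tailEmbedding_iff {i : Fin K} :
    i ∉ Set.range (tailEmbedding K k) ↔ (i : ℕ) < k := by
  refine ⟨fun hi => ?_, ?_⟩
  · by_contra! h
    exact hi ⟨_, tailEmbedding_sub h⟩
  · rintro hi ⟨j, rfl⟩
    exact (Nat.le_add_right k j).not_gt hi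

theorem extend_tailEmbedding_of_lt {β : Type*} (w : Fin (K - k) → β) (a : Fin K → β) {i : Fin K}
    (hi : (i : ℕ) < k) : Function.extend (tailEmbedding K k) w a i = a i :=
  Function.extend_apply' w a i (notMem_range_tailEmbedding_iff.mpr hi)

theorem extend_tailEmbedding_of_le {β : Type*} (w : Fin (K - k) → β) (a : Fin K → β) {i : Fin K}
    (hi : k ≤ (i : ℕ)) : Function.extend (tailEmbedding K k) w a i = w ⟨i - k, by omega⟩ := by
  conv_lhs => rw [← tailEmbedding_sub hi, (tailEmbedding K k).injective.extend_apply]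

theorem residualMass_tailEmbedding (a : Fin K → ℝ) :
    residualMass (tailEmbedding K k) a = sHead a k := by
  have hhead : (Finset.univ.map (tailEmbedding K k))ᶜ =
      Finset.univ.filter fun i : Fin K => (i : ℕ) < k := by
    ext i
    simpa using! notMem_range_tailEmbedding_iff (i := i)
  rw [residualMass, sHead, hhead]

end Tail

/-- if a_i = b_i for the first k coordinates and s_k > 0, the
box-constrained maximizer pins the first k coordinates at a and equals s_k
times the maximizer of the rescaled box-constrained subproblem on the last
K−k coordinates. -/
theorem bcsoftmax_fixed_head_recursion
    (K : ℕ) (hK : 1 ≤ K) (x a b : Fin K → ℝ)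
    (ha : ∀ i, 0 ≤ a i ∧ a i < 1) (hasum : ∑ i, a i ≤ 1)
    (hb : ∀ i, 0 < b i ∧ b i ≤ 1) (hbsum : 1 ≤ ∑ i, b i)
    (hab : ∀ i, a i ≤ b i)
    (k : ℕ) (hk : k < K)
    (hfix : ∀ i : Fin K, (i : ℕ) < k → a i = b i)
    (hs : 0 < sHead a k)
    (u : Fin (K - k) → ℝ)
    (hu : u ∈ simplex (K - k) ∧
      ∀ j : Fin (K - k),
        a ⟨k + j, by have := j.isLt; omega⟩ / sHead a k ≤ u j ∧
        u j ≤ b ⟨k + j, by have := j.isLt; omega⟩ / sHead a k)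
    (humax : ∀ v : Fin (K - k) → ℝ,
      (v ∈ simplex (K - k) ∧
        ∀ j : Fin (K - k),
          a ⟨k + j, by have := j.isLt; omega⟩ / sHead a k ≤ v j ∧
          v j ≤ b ⟨k + j, by have := j.isLt; omega⟩ / sHead a k) →
      F 1 (fun j => x ⟨k + j, by have := j.isLt; omega⟩) v ≤
        F 1 (fun j => x ⟨k + j, by have := j.isLt; omega⟩) u)
    (y : Fin K → ℝ)
    (hy : y ∈ simplex K ∧ ∀ i, a i ≤ y i ∧ y i ≤ b i)
    (hymax : ∀ z, (z ∈ simplex K ∧ ∀ i, a i ≤ z i ∧ z i ≤ b i) → F 1 x z ≤ F 1 x y) :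
    (∀ i : Fin K, (i : ℕ) < k → y i = a i) ∧
      ∀ i : Fin K, ∀ h : k ≤ (i : ℕ),
        y i = sHead a k * u ⟨(i : ℕ) - k, by have := i.isLt; omega⟩ := by
  rw [← residualMass_tailEmbedding] at hs hu humax ⊢
  rw [bcsoftmax_fixed_head_recursion_general one_pos
    (fun i hi => hfix i (notMem_range_tailEmbedding_iff.mp hi)) hs
    (mem_boxSimplex_iff_mem_simplex.mpr hu) (isMaxOn_entropicObjective_boxSimplex_iff.mpr humax)
    (mem_boxSimplex_iff_mem_simplex.mpr hy) (isMaxOn_entropicObjective_boxSimplex_iff.mpr hymax)]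
  exact ⟨fun _ hi => extend_tailEmbedding_of_lt _ _ hi,
    fun _ hi => extend_tailEmbedding_of_le _ _ hi⟩
end

section
/- Let x ∈ ℝ^K and b ∈ U^K be such that b_1/exp(x_1) ≤ b_2/exp(x_2) ≤ ⋯ ≤ b_K/exp(x_K), and let y be the maximizer of F_{1,x} over Δ^K ∩ {y : y_i ≤ b_i for all i}. Then there exists ρ ∈ {0,…,K} such that y_k = b_k for all k ≤ ρ, and for all k > ρ, y_k < b_k and y_k = (1 − Σ_{i=1}^{ρ} b_i) · exp(x_k)/Σ_{j=ρ+1}^{K} exp(x_j). -/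
/-!
Moving a little mass from a coordinate `j` to an unsaturated coordinate `i` stays feasible, and it
increases the objective as long as `y i / exp (x i / τ) < y j / exp (x j / τ)`. Hence at a maximizer
the ratio `y / exp (x / τ)` attains its maximum at every unsaturated coordinate. In particular it is
constant on the unsaturated coordinates, which makes `y` a rescaled softmax there. If `i` is
unsaturated and `j` is saturated, then `b j / exp (x j / τ) = y j / exp (x j / τ)` is at most
`y i / exp (x i / τ) < b i / exp (x i / τ)`, so `j` precedes `i` in the sorted order.
-/

open Finset Function

lemma sum_filter_not_eq_sum_sub_sum_filter {ι G : Type*} [Fintype ι] [AddCommGroup G] {p : ι → Prop}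
    [DecidablePred p] {y b : ι → G} (h : ∀ k, p k → y k = b k) :
    ∑ k with ¬p k, y k = ∑ k, y k - ∑ k with p k, b k := by
  have heq : ∑ k with p k, y k = ∑ k with p k, b k :=
    sum_congr rfl fun k hk ↦ h k (mem_filter.1 hk).2
  rw [eq_sub_iff_add_eq', ← heq, sum_filter_add_sum_filter_not]

section Transfer

variable {ι G : Type*} [DecidableEq ι] [AddCommGroup G]

/-- The vector obtained from `y` by moving the amount `ε` from coordinate `j` to coordinate `i`,
the perturbation used in the exchange argument. It is meant for `i ≠ j`; for `i = j` the encoding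
by updates loses the amount `ε`. -/
def transfer (y : ι → G) (i j : ι) (ε : G) : ι → G :=
  update (update y i (y i + ε)) j (y j - ε)

lemma sum_comp_update [Fintype ι] {α : Type*} (f : ι → α → G) (y : ι → α) (i : ι) (a : α) :
    ∑ k, f k (update y i a k) = ∑ k, f k (y k) + (f i a - f i (y i)) := by
  simp only [apply_update f, sum_update_of_mem (mem_univ i), sdiff_singleton_eq_erase,
    sum_erase_eq_sub (mem_univ i)]
  abel

lemma sum_comp_transfer [Fintype ι] {H : Type*} [AddCommGroup H] (f : ι → G → H) (y : ι → G)
    {i j : ι} (hij : i ≠ j) (ε : G) :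
    ∑ k, f k (transfer y i j ε k) =
      ∑ k, f k (y k) + (f i (y i + ε) - f i (y i)) + (f j (y j - ε) - f j (y j)) := by
  rw [transfer, sum_comp_update, sum_comp_update, update_of_ne hij.symm]

lemma forall_transfer {p : ι → G → Prop} {y : ι → G} {i j : ι} {ε : G}
    (hy : ∀ k, p k (y k)) (hi : p i (y i + ε)) (hj : p j (y j - ε)) :
    ∀ k, p k (transfer y i j ε k) :=
  (forall_update_iff _ p).2 ⟨hj, fun k _ ↦ (forall_update_iff y p).2 ⟨hi, fun k _ ↦ hy k⟩ k⟩

end Transfer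

section WaterFilling

variable {ι 𝕜 : Type*} [Field 𝕜]

lemma eq_sum_mul_div_sum_of_div_eq {s : Finset ι} {w y : ι → 𝕜} {k : ι} (hk : k ∈ s)
    (hw : ∀ j ∈ s, w j ≠ 0) (hsum : ∑ j ∈ s, w j ≠ 0) (hdiv : ∀ j ∈ s, y j / w j = y k / w k) :
    y k = (∑ j ∈ s, y j) * (w k / ∑ j ∈ s, w j) := by
  have sum_eq : ∑ j ∈ s, y j = y k / w k * ∑ j ∈ s, w j := by
    rw [mul_sum]
    exact sum_congr rfl fun j hj ↦ (div_eq_iff (hw j hj)).1 (hdiv j hj)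
  have hwk := hw k hk
  rw [sum_eq]
  field_simp

variable [LinearOrder 𝕜]

/-- The water-filling condition on a vector `y` with weights `w` and upper bounds `b`: the level
`y / w` is maximal at every coordinate that is strictly below its bound. For `w = exp (x / τ)` it is
the first-order optimality condition of the entropic objective. -/
def IsWaterFilling (w b y : ι → 𝕜) : Prop :=
  ∀ i j, y i < b i → y j / w j ≤ y i / w i

namespace IsWaterFilling

lemma isLowerSet_saturated [IsStrictOrderedRing 𝕜] [Preorder ι] {w b y : ι → 𝕜}
    (h : IsWaterFilling w b y) (hw : ∀ i, 0 < w i) (hyb : ∀ i, y i ≤ b i)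
    (hsorted : Monotone fun i ↦ b i / w i) :
    IsLowerSet {i | y i = b i} := by
  intro j i hij hj
  by_contra hi
  have hlt : y i < b i := (hyb i).lt_of_ne hi
  have : b i / w i < b i / w i :=
    calc b i / w i ≤ b j / w j := hsorted hij
      _ = y j / w j := by rw [hj]
      _ ≤ y i / w i := h i j hlt
      _ < b i / w i := div_lt_div_of_pos_right hlt (hw i)
  exact this.false

lemma eq_sum_mul_div_sum [IsStrictOrderedRing 𝕜] {w b y : ι → 𝕜} (h : IsWaterFilling w b y)
    (hw : ∀ i, 0 < w i) {s : Finset ι} (hs : ∀ i ∈ s, y i < b i) {k : ι} (hk : k ∈ s) :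
    y k = (∑ j ∈ s, y j) * (w k / ∑ j ∈ s, w j) :=
  eq_sum_mul_div_sum_of_div_eq hk (fun j _ ↦ (hw j).ne') (sum_pos (fun j _ ↦ hw j) ⟨k, hk⟩).ne'
    fun j hj ↦ (h k j (hs k hk)).antisymm (h j k (hs j hj))

end IsWaterFilling

end WaterFilling

lemma exists_mem_iff_val_lt_of_isLowerSet {K : ℕ} {s : Set (Fin K)} (hs : IsLowerSet s) :
    ∃ ρ ≤ K, ∀ k : Fin K, k ∈ s ↔ (k : ℕ) < ρ := by
  obtain rfl | ⟨a, rfl⟩ := hs.eq_univ_or_Iio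
  · exact ⟨K, le_rfl, fun k ↦ by simp⟩
  · exact ⟨a, a.is_le', fun k ↦ Iff.rfl⟩

lemma mul_log_sub_mul_log_le {s t : ℝ} (hs : 0 < s) (ht : 0 ≤ t) :
    s * Real.log s - t * Real.log t ≤ (s - t) * (Real.log s + 1) := by
  obtain rfl | ht := ht.eq_or_lt
  · linarith
  · have hlog : Real.log s - Real.log t ≤ s / t - 1 := by
      rw [← Real.log_div hs.ne' ht.ne']
      exact Real.log_le_sub_one_of_pos (div_pos hs ht)
    have hmul : t * (Real.log s - Real.log t) ≤ s - t :=
      calc t * (Real.log s - Real.log t) ≤ t * (s / t - 1) := by gcongr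
        _ = s - t := by field_simp
    linarith

lemma log_sub_lt_log_sub_of_div_exp_lt {s t u v : ℝ} (hs : 0 < s) (ht : 0 < t)
    (h : s / Real.exp u < t / Real.exp v) : Real.log s - u < Real.log t - v := by
  have hlog := Real.log_lt_log (by positivity) h
  rwa [Real.log_div hs.ne' (Real.exp_ne_zero u), Real.log_div ht.ne' (Real.exp_ne_zero v),
    Real.log_exp, Real.log_exp] at hlog

lemma exists_pos_le_add_div_lt_sub_div {s t u v δ : ℝ} (hδ : 0 < δ) (h : s / u < t / v) :
    ∃ ε > 0, ε ≤ δ ∧ (s + ε) / u < (t - ε) / v := by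
  have hev : ∀ᶠ ε in nhds (0 : ℝ), (s + ε) / u < (t - ε) / v :=
    ContinuousAt.eventually_lt (by fun_prop) (by fun_prop) (by simpa using h)
  obtain ⟨ε, ⟨hε, hεδ⟩, hlt⟩ :=
    (Filter.Eventually.and (Ioc_mem_nhdsGT hδ) (hev.filter_mono nhdsWithin_le_nhds)).exists
  exact ⟨ε, hε, hεδ, hlt⟩

section Maximizer

variable {K : ℕ} {τ ε : ℝ} {x b y : Fin K → ℝ} {i j : Fin K}

/-- The feasible set of the upper-bounded entropic problem: the probability vectors lying
coordinatewise below `b`. -/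
def cappedSimplex (b : Fin K → ℝ) : Set (Fin K → ℝ) :=
  {z | z ∈ simplex K ∧ ∀ i, z i ≤ b i}

lemma transfer_mem_cappedSimplex (hy : y ∈ cappedSimplex b) (hij : i ≠ j) (hε : 0 ≤ ε)
    (hi : y i + ε ≤ b i) (hj : ε ≤ y j) : transfer y i j ε ∈ cappedSimplex b := by
  obtain ⟨⟨hnonneg, hsum⟩, hle⟩ := hy
  refine ⟨⟨forall_transfer hnonneg (add_nonneg (hnonneg i) hε) (sub_nonneg.2 hj), ?_⟩,
    forall_transfer (p := fun k t ↦ t ≤ b k) hle hi ((sub_le_self _ hε).trans (hle j))⟩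
  rw [sum_comp_transfer (fun _ t ↦ t) y hij, hsum]
  ring

lemma F_lt_F_transfer (hτ : 0 < τ) (hij : i ≠ j) (hyi : 0 ≤ y i) (hε : 0 < ε) (hyj : ε < y j)
    (h : (y i + ε) / Real.exp (x i / τ) < (y j - ε) / Real.exp (x j / τ)) :
    F τ x y < F τ x (transfer y i j ε) := by
  have hi : 0 < y i + ε := by positivity
  have hj : 0 < y j - ε := sub_pos.2 hyj
  have entropy_change : ((y i + ε) * Real.log (y i + ε) - y i * Real.log (y i)) +
      ((y j - ε) * Real.log (y j - ε) - y j * Real.log (y j)) ≤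
      ε * (Real.log (y i + ε) - Real.log (y j - ε)) := by
    linarith [mul_log_sub_mul_log_le hi hyi, mul_log_sub_mul_log_le hj (hε.trans hyj).le]
  have marginal_gain : τ * (Real.log (y i + ε) - Real.log (y j - ε)) < x i - x j := by
    rw [← lt_div_iff₀' hτ, sub_div]
    linarith [log_sub_lt_log_sub_of_div_exp_lt hi hj h]
  have cost_lt_gain := mul_lt_mul_of_pos_left marginal_gain hε
  have entropy_cost := mul_le_mul_of_nonneg_left entropy_change hτ.le
  rw [F, F, sum_comp_transfer (fun k t ↦ x k * t) y hij,
    sum_comp_transfer (fun _ t ↦ t * Real.log t) y hij]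
  linarith

lemma isWaterFilling_of_isMaxOn (hτ : 0 < τ) (hy : y ∈ cappedSimplex b)
    (hmax : IsMaxOn (F τ x) (cappedSimplex b) y) :
    IsWaterFilling (fun k ↦ Real.exp (x k / τ)) b y := by
  intro i j hi
  by_contra! hlt
  have hij : i ≠ j := by
    rintro rfl
    exact hlt.false
  have hyi : 0 ≤ y i := hy.1.1 i
  obtain ⟨ε, hε, hεb, hratio⟩ := exists_pos_le_add_div_lt_sub_div (sub_pos.2 hi) hlt
  have hyj : ε < y j := by
    have : 0 < (y j - ε) / Real.exp (x j / τ) := lt_of_le_of_lt (by positivity) hratio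
    exact sub_pos.1 ((div_pos_iff_of_pos_right (Real.exp_pos _)).1 this)
  have hmem : transfer y i j ε ∈ cappedSimplex b :=
    transfer_mem_cappedSimplex hy hij hε.le (by linarith) hyj.le
  exact (F_lt_F_transfer hτ hij hyi hε hyj hratio).not_ge (hmax hmem)

theorem ubsoftmax_sorted_structure_general (hτ : 0 < τ)
    (hsorted : Monotone fun i ↦ b i / Real.exp (x i / τ))
    (hy : y ∈ cappedSimplex b) (hmax : IsMaxOn (F τ x) (cappedSimplex b) y) :
    ∃ ρ : ℕ, ρ ≤ K ∧
      (∀ k : Fin K, (k : ℕ) < ρ → y k = b k) ∧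
      ∀ k : Fin K, ρ ≤ (k : ℕ) →
        y k < b k ∧
        y k = (1 - ∑ i ∈ univ.filter (fun i : Fin K ↦ (i : ℕ) < ρ), b i) *
          (Real.exp (x k / τ) /
            ∑ j ∈ univ.filter (fun j : Fin K ↦ ρ ≤ (j : ℕ)), Real.exp (x j / τ)) := by
  have hwater := isWaterFilling_of_isMaxOn hτ hy hmax
  have hexp : ∀ k, 0 < Real.exp (x k / τ) := fun k ↦ Real.exp_pos _
  obtain ⟨ρ, hρK, hρ⟩ :=
    exists_mem_iff_val_lt_of_isLowerSet (hwater.isLowerSet_saturated hexp hy.2 hsorted)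
  have hsat : ∀ k : Fin K, (k : ℕ) < ρ → y k = b k := fun k ↦ (hρ k).2
  have hunsat : ∀ k : Fin K, ρ ≤ (k : ℕ) → y k < b k := fun k hk ↦
    (hy.2 k).lt_of_ne fun heq ↦ ((hρ k).1 heq).not_ge hk
  refine ⟨ρ, hρK, hsat, fun k hk ↦ ⟨hunsat k hk, ?_⟩⟩
  have hmass : 1 - ∑ i ∈ univ.filter (fun i : Fin K ↦ (i : ℕ) < ρ), b i =
      ∑ j ∈ univ.filter (fun j : Fin K ↦ ρ ≤ (j : ℕ)), y j := by
    simpa only [not_lt, hy.1.2] using (sum_filter_not_eq_sum_sub_sum_filter hsat).symm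
  rw [hmass]
  exact hwater.eq_sum_mul_div_sum hexp (fun i hi ↦ hunsat i (mem_filter.1 hi).2)
    (mem_filter.2 ⟨mem_univ k, hk⟩)

end Maximizer

/-- with b_i/exp(x_i) nondecreasing, the maximizer y of F_{1,x}
over the upper-bounded simplex has a threshold ρ ∈ {0,…,K}: the first ρ
coordinates are saturated and the remaining ones are strictly below their
bounds and proportional to exp(x_k). -/
theorem ubsoftmax_sorted_structure
    (K : ℕ) (hK : 1 ≤ K) (x b : Fin K → ℝ)
    (hb : ∀ i, 0 < b i ∧ b i ≤ 1) (hbsum : 1 ≤ ∑ i, b i)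
    (hsorted : ∀ i j : Fin K, i ≤ j → b i / Real.exp (x i) ≤ b j / Real.exp (x j))
    (y : Fin K → ℝ)
    (hy : y ∈ simplex K ∧ ∀ i, y i ≤ b i)
    (hymax : ∀ z, (z ∈ simplex K ∧ ∀ i, z i ≤ b i) → F 1 x z ≤ F 1 x y) :
    ∃ ρ : ℕ, ρ ≤ K ∧
      (∀ k : Fin K, (k : ℕ) < ρ → y k = b k) ∧
      ∀ k : Fin K, ρ ≤ (k : ℕ) →
        y k < b k ∧
        y k = (1 - ∑ i ∈ Finset.univ.filter (fun i : Fin K => (i : ℕ) < ρ), b i) *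
          (Real.exp (x k) /
            ∑ j ∈ Finset.univ.filter (fun j : Fin K => ρ ≤ (j : ℕ)), Real.exp (x j)) := by
  simpa only [div_one] using ubsoftmax_sorted_structure_general (τ := 1) one_pos
    (fun i j hij ↦ by simpa only [div_one] using hsorted i j hij) hy (isMaxOn_iff.2 hymax)
end
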